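/- Every regular projective correlation of P^3(ℝ) is the product of at most five null polarities: for every C ∈ GL(4,ℝ) with det C > 0, regarded as a correlation of P^3(ℝ), there exist an odd number k with 1 ≤ k ≤ 5, invertible skew-symmetric real 4×4 matrices S₁, …, S_k, and a nonzero λ ∈ ℝ, such that C = λ • (S₁ * S₂ * ⋯ * S_k). -/

import Mathlib

open Matrix

abbrev M2 := Matrix (Fin 2) (Fin 2) ℝ

/-- invertible skew-symmetric -/
def Sk {n : Type*} [Fintype n] [DecidableEq n] (S : Matrix n n ℝ) : Prop :=
  IsUnit S ∧ Sᵀ = -S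

def Good {n : Type*} [Fintype n] [DecidableEq n] (C : Matrix n n ℝ) : Prop :=
  ∃ S₁ S₂ S₃ S₄ S₅ : Matrix n n ℝ, Sk S₁ ∧ Sk S₂ ∧ Sk S₃ ∧ Sk S₄ ∧ Sk S₅ ∧
    C = S₁ * S₂ * S₃ * S₄ * S₅

lemma Sk.inv {n : Type*} [Fintype n] [DecidableEq n] {S : Matrix n n ℝ} (h : Sk S) : Sk S⁻¹ := by
  refine ⟨(Matrix.isUnit_nonsing_inv_iff).2 h.1, ?_⟩
  rw [Matrix.transpose_nonsing_inv, h.2]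
  have hd := (Matrix.isUnit_iff_isUnit_det _).1 h.1
  apply Matrix.inv_eq_left_inv
  rw [neg_mul_neg, Matrix.nonsing_inv_mul _ hd]

lemma Sk.congr {n : Type*} [Fintype n] [DecidableEq n] {S g : Matrix n n ℝ} (h : Sk S)
    (hg : IsUnit g) : Sk (g * S * gᵀ) := by
  refine ⟨(hg.mul h.1).mul ((Matrix.isUnit_transpose _).2 hg), ?_⟩
  simp [Matrix.transpose_mul, h.2, Matrix.mul_assoc]

lemma Good.congr {n : Type*} [Fintype n] [DecidableEq n] {C g : Matrix n n ℝ} (hg : IsUnit g)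
    (h : Good (g * C * gᵀ)) : Good C := by
  obtain ⟨S₁, S₂, S₃, S₄, S₅, h1, h2, h3, h4, h5, e⟩ := h
  have hd := (Matrix.isUnit_iff_isUnit_det _).1 hg
  have hgi : IsUnit g⁻¹ := (Matrix.isUnit_nonsing_inv_iff).2 hg
  have hgt : IsUnit gᵀ := (Matrix.isUnit_transpose _).2 hg
  have hdt := (Matrix.isUnit_iff_isUnit_det _).1 hgt
  refine ⟨_, _, _, _, _, h1.congr hgi, h2.congr hgt, h3.congr hgi, h4.congr hgt, h5.congr hgi, ?_⟩
  rw [Matrix.transpose_transpose, Matrix.transpose_nonsing_inv]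
  have : C = g⁻¹ * (g * C * gᵀ) * (gᵀ)⁻¹ := by
    rw [Matrix.mul_assoc g, Matrix.nonsing_inv_mul_cancel_left _ _ hd,
      Matrix.mul_nonsing_inv_cancel_right _ _ hdt]
  rw [this, e]
  simp only [Matrix.mul_assoc]
  rw [Matrix.nonsing_inv_mul_cancel_left _ _ hdt, Matrix.mul_nonsing_inv_cancel_left _ _ hd,
    Matrix.nonsing_inv_mul_cancel_left _ _ hdt, Matrix.mul_nonsing_inv_cancel_left _ _ hd]

lemma Sk.reindex {n m : Type*} [Fintype n] [DecidableEq n] [Fintype m] [DecidableEq m]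
    (e : m ≃ n) {S : Matrix n n ℝ} (h : Sk S) : Sk (S.submatrix e e) := by
  refine ⟨(Matrix.isUnit_submatrix_equiv e e).2 h.1, ?_⟩
  rw [Matrix.transpose_submatrix, h.2]; rfl

lemma Good.reindex {n m : Type*} [Fintype n] [DecidableEq n] [Fintype m] [DecidableEq m]
    (e : m ≃ n) {C : Matrix n n ℝ} (h : Good C) : Good (C.submatrix e e) := by
  obtain ⟨S₁, S₂, S₃, S₄, S₅, h1, h2, h3, h4, h5, rfl⟩ := h
  refine ⟨_, _, _, _, _, h1.reindex e, h2.reindex e, h3.reindex e, h4.reindex e, h5.reindex e, ?_⟩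
  simp only [Matrix.submatrix_mul_equiv]

def JJ : M2 := !![0, 1; -1, 0]

lemma J_tr : JJᵀ = -JJ := by ext i j; fin_cases i <;> fin_cases j <;> simp [JJ]
lemma J_mul_J : JJ * JJ = -1 := by ext i j; fin_cases i <;> fin_cases j <;> simp [JJ]
lemma J_det : JJ.det = 1 := by simp [JJ, Matrix.det_fin_two]
lemma J_unit : IsUnit JJ := by rw [Matrix.isUnit_iff_isUnit_det, J_det]; exact isUnit_one
lemma J_mul_tr (X : M2) : JJ * Xᵀ = X.adjugate * JJ := by
  rw [Matrix.adjugate_fin_two]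
  ext i j; fin_cases i <;> fin_cases j <;> simp [JJ, Matrix.mul_apply]

lemma sk_anti (X : M2) (hX : IsUnit X) (b : ℝ) : Sk (fromBlocks 0 X (-Xᵀ) (b • JJ)) := by
  have hd := (Matrix.isUnit_iff_isUnit_det _).1 hX
  have hdt := (Matrix.isUnit_iff_isUnit_det _).1 ((Matrix.isUnit_transpose _).2 hX)
  constructor
  · apply IsUnit.of_mul_eq_one (fromBlocks (Xᵀ⁻¹ * (b • JJ) * X⁻¹) (-Xᵀ⁻¹) X⁻¹ 0)
    rw [fromBlocks_multiply]
    simp only [Matrix.zero_mul, Matrix.mul_zero, zero_add, add_zero, Matrix.neg_mul,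
      Matrix.mul_neg, neg_neg, Matrix.mul_nonsing_inv _ hd, Matrix.mul_nonsing_inv _ hdt,
      Matrix.mul_assoc, Matrix.mul_nonsing_inv_cancel_left _ _ hdt]
    simp
  · rw [fromBlocks_transpose, fromBlocks_neg]; simp [J_tr]

lemma sk_diag (a : ℝ) (b : ℝ) (ha : a ≠ 0) (hb : b ≠ 0) : Sk (fromBlocks (a • JJ) 0 0 (b • JJ)) := by
  constructor
  · rw [Matrix.isUnit_fromBlocks_zero₁₂]
    constructor <;> rw [Matrix.isUnit_iff_isUnit_det, Matrix.det_smul, J_det] <;> simp [*]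
  · rw [fromBlocks_transpose, fromBlocks_neg]; simp [J_tr]

/-- companion form -/
lemma exists_comp (X : M2) (h : X.trace ^ 2 - 4 * X.det ≠ 0) :
    ∃ W : M2, IsUnit W ∧ X * W = W * !![0, -X.det; 1, X.trace] := by
  rw [Matrix.trace_fin_two, Matrix.det_fin_two] at *
  have key : ∃ a b : ℝ, a * (X 1 0 * a + X 1 1 * b) - (X 0 0 * a + X 0 1 * b) * b ≠ 0 := by
    by_contra! hc
    have h1 := hc 1 0
    have h2 := hc 0 1
    have h3 := hc 1 1
    simp at h1 h2
    simp [h1, h2] at h3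
    apply h; rw [h1, h2]
    have : X 1 1 = X 0 0 := by linarith
    rw [this]; ring
  obtain ⟨a, b, hab⟩ := key
  refine ⟨!![a, X 0 0 * a + X 0 1 * b; b, X 1 0 * a + X 1 1 * b], ?_, ?_⟩
  · rw [Matrix.isUnit_iff_isUnit_det, Matrix.det_fin_two]
    simpa using hab
  · ext i j; fin_cases i <;> fin_cases j <;> simp [Matrix.mul_apply] <;> ring

lemma exists_sim (X Y : M2) (ht : X.trace = Y.trace) (hd : X.det = Y.det)
    (h : X.trace ^ 2 - 4 * X.det ≠ 0) : ∃ V : M2, IsUnit V ∧ V * X = Y * V := by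
  obtain ⟨W, hW, e⟩ := exists_comp X h
  obtain ⟨W', hW', e'⟩ := exists_comp Y (by rwa [← ht, ← hd])
  have hWd := (Matrix.isUnit_iff_isUnit_det _).1 hW
  refine ⟨W' * W⁻¹, hW'.mul ((Matrix.isUnit_nonsing_inv_iff).2 hW), ?_⟩
  rw [← ht, ← hd] at e'
  have : X = W * !![0, -X.det; 1, X.trace] * W⁻¹ := by
    rw [← e, Matrix.mul_nonsing_inv_cancel_right _ _ hWd]
  conv_lhs => rw [this]
  rw [← Matrix.mul_assoc Y, e']
  simp only [Matrix.mul_assoc]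
  rw [Matrix.nonsing_inv_mul_cancel_left _ _ hWd]

lemma trace_lemma (E : M2) : ∃ N : M2, N.det = 1 ∧ (N * E).trace = 0 ∧ N.trace ^ 2 - 4 * N.det ≠ 0 := by
  simp only [Matrix.trace_fin_two, Matrix.det_fin_two, Matrix.mul_apply, Fin.sum_univ_two]
  by_cases h3 : E 1 0 = 0
  · by_cases h2 : E 0 1 = 0
    · exact ⟨!![0, 1; -1, 0], by simp [h2, h3]⟩
    · refine ⟨!![2, 0; -(2 * E 0 0 + E 1 1 / 2) / E 0 1, 1/2], ?_, ?_, ?_⟩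
      · simp
      · simp; field_simp; ring
      · norm_num
  · refine ⟨!![2, -(2 * E 0 0 + E 1 1 / 2) / E 1 0; 0, 1/2], ?_, ?_, ?_⟩
    · simp
    · simp; field_simp; ring
    · norm_num

lemma good_core (P T R N : M2) (b τ : ℝ) (hP : IsUnit P) (hT : IsUnit T) (hN : N.det = 1)
    (hτ : τ ^ 2 * (P.det * T.det) = 1) (Q : M2) (hQ : Q = R * N + b • (T * JJ)) (hQd : Q.det ≠ 0)
    (hdisc : Q.trace ^ 2 - 4 * Q.det ≠ 0)
    (htr : (Q.adjugate * (1 - τ • (T * Nᵀ * P * N))).trace = 0) :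
    Good (fromBlocks P 0 R T) := by
  have hQu : IsUnit Q := by rw [Matrix.isUnit_iff_isUnit_det]; exact hQd.isUnit
  have hNu : IsUnit N := by rw [Matrix.isUnit_iff_isUnit_det, hN]; exact isUnit_one
  have hTd : T.det ≠ 0 := by rintro h; simp [h] at hτ
  have hτ0 : τ ≠ 0 := by rintro h; simp [h] at hτ
  have hadjt : Q.adjugate.trace = Q.trace := by
    rw [Matrix.adjugate_fin_two, Matrix.trace_fin_two, Matrix.trace_fin_two]; simp [add_comm]
  have hadjd : Q.adjugate.det = Q.det := by
    rw [Matrix.det_adjugate]; simp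
  obtain ⟨U, hU, hUe⟩ := exists_sim Q.adjugate (τ • (P * N * Q.adjugate * T * Nᵀ))
    (by
      rw [Matrix.mul_sub, Matrix.trace_sub, sub_eq_zero] at htr
      rw [Matrix.mul_one] at htr
      rw [htr, Matrix.mul_smul, Matrix.trace_smul, Matrix.trace_smul]
      congr 1
      rw [Matrix.mul_assoc (P * N), Matrix.mul_assoc (P * N), Matrix.trace_mul_comm (P * N)]
      simp only [Matrix.mul_assoc])
    (by
      rw [Matrix.det_smul]
      simp only [Matrix.det_mul, Matrix.det_transpose, hN, Fintype.card_fin]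
      linear_combination (-Q.adjugate.det) * hτ)
    (by rwa [hadjt, hadjd])
  have hUd := (Matrix.isUnit_iff_isUnit_det _).1 hU
  have hUd0 : U.det ≠ 0 := hUd.ne_zero
  have hQi := (Matrix.isUnit_iff_isUnit_det _).1 hQu
  have hQiu : IsUnit Q⁻¹ := (Matrix.isUnit_nonsing_inv_iff).2 hQu
  set K := U * Q⁻¹ * JJ with hK
  set L := P * N * Q⁻¹ * JJ with hL
  have hKu : IsUnit K := (hU.mul hQiu).mul J_unit
  have hLu : IsUnit L := ((hP.mul hNu).mul hQiu).mul J_unit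
  have hS1 := sk_anti L hLu 1
  have hS2 := sk_anti K hKu 0
  have hS3 := sk_diag 1 (-(τ * T.det)) one_ne_zero (neg_ne_zero.2 (mul_ne_zero hτ0 hTd))
  have hS4 := sk_anti (-(JJ * U)) (J_unit.mul hU).neg 0
  have hS5 := sk_anti N hNu b
  -- similarity in terms of Q⁻¹
  have hsim : U * Q⁻¹ = τ • (P * N * Q⁻¹ * (T * Nᵀ * U)) := by
    have : Q.adjugate = Q.det • Q⁻¹ := by
      rw [Matrix.inv_def, smul_smul, Ring.mul_inverse_cancel _ hQi, one_smul]
    rw [this] at hUe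
    simp only [Matrix.mul_smul, Matrix.smul_mul] at hUe
    rw [smul_comm] at hUe
    have := smul_right_injective M2 hQd hUe
    rw [this]; simp only [Matrix.mul_assoc]
  have hLK : (τ * (T.det * U.det)) • L = K * (T * Nᵀ * U)ᵀ := by
    set X := T * Nᵀ * U with hX
    have hXd : X.det = T.det * U.det := by simp [hX, Matrix.det_mul, hN]
    have h1 : X * X.adjugate = X.det • (1 : M2) := Matrix.mul_adjugate X
    rw [hK, Matrix.mul_assoc (U * Q⁻¹), J_mul_tr, hsim, ← Matrix.mul_assoc, Matrix.smul_mul,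
      Matrix.mul_assoc _ X, h1, hXd, hL]
    simp only [Matrix.mul_smul, Matrix.smul_mul, smul_smul, Matrix.mul_one]
  have hLKt : (τ * (T.det * U.det)) • Lᵀ = (T * Nᵀ * U) * Kᵀ := by
    rw [← Matrix.transpose_smul, hLK, Matrix.transpose_mul, Matrix.transpose_transpose]
  have hS2d := (Matrix.isUnit_iff_isUnit_det _).1 hS2.1
  have hS5d := (Matrix.isUnit_iff_isUnit_det _).1 hS5.1
  refine ⟨_, _, _, _, _, hS1, hS2.inv, hS3, hS4, hS5.inv, ?_⟩
  have hKt := (Matrix.isUnit_iff_isUnit_det _).1 ((Matrix.isUnit_transpose _).2 hKu)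
  have hKd := (Matrix.isUnit_iff_isUnit_det _).1 hKu
  have hinv : (fromBlocks 0 K (-Kᵀ) ((0:ℝ) • JJ))⁻¹ = fromBlocks 0 (-Kᵀ⁻¹) K⁻¹ 0 := by
    apply Matrix.inv_eq_right_inv
    rw [fromBlocks_multiply]
    simp [Matrix.mul_nonsing_inv _ hKd, Matrix.mul_nonsing_inv _ hKt]
  have h34 : fromBlocks ((1:ℝ) • JJ) 0 0 ((-(τ * T.det)) • JJ) *
      fromBlocks 0 (-(JJ * U)) (-(-(JJ * U))ᵀ) ((0:ℝ) • JJ) =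
      fromBlocks 0 U (-((τ * T.det) • U.adjugate)) 0 := by
    rw [fromBlocks_multiply]
    have : JJ * (JJ * U)ᵀ = U.adjugate := by
      rw [J_mul_tr, Matrix.adjugate_mul_distrib, Matrix.mul_assoc,
        show JJ.adjugate = -JJ by
          rw [Matrix.adjugate_fin_two]; ext i j; fin_cases i <;> fin_cases j <;> simp [JJ]]
      simp [J_mul_J]
    have h2 : JJ * (JJ * U) = -U := by rw [← Matrix.mul_assoc, J_mul_J]; simp
    simp [-Matrix.transpose_mul, this, h2]
  have main : fromBlocks P 0 R T * fromBlocks 0 N (-Nᵀ) (b • JJ) =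
      fromBlocks 0 L (-Lᵀ) ((1:ℝ) • JJ) * (fromBlocks 0 K (-Kᵀ) ((0:ℝ) • JJ))⁻¹ *
      (fromBlocks ((1:ℝ) • JJ) 0 0 ((-(τ * T.det)) • JJ) *
      fromBlocks 0 (-(JJ * U)) (-(-(JJ * U))ᵀ) ((0:ℝ) • JJ)) := by
    rw [hinv, h34, fromBlocks_multiply, fromBlocks_multiply, fromBlocks_multiply]
    have hUK : JJ * K⁻¹ * U = Q := by
      have : K⁻¹ = JJ⁻¹ * Q * U⁻¹ := by
        rw [hK, Matrix.mul_inv_rev, Matrix.mul_inv_rev, Matrix.nonsing_inv_nonsing_inv _ hQi,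
          Matrix.mul_assoc]
      rw [this]
      have hJ := (Matrix.isUnit_iff_isUnit_det _).1 J_unit
      simp only [Matrix.mul_assoc]
      rw [Matrix.mul_nonsing_inv_cancel_left _ _ hJ, Matrix.nonsing_inv_mul _ hUd, Matrix.mul_one]
    have hLU : L * K⁻¹ * U = P * N := by
      rw [hL, Matrix.mul_assoc, Matrix.mul_assoc, ← Matrix.mul_assoc JJ, hUK,
        Matrix.nonsing_inv_mul_cancel_right _ _ hQi]
    have hLt : (τ * T.det) • (Lᵀ * Kᵀ⁻¹ * U.adjugate) = T * Nᵀ := by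
      have h3 : (τ * (T.det * U.det)) • (Lᵀ * Kᵀ⁻¹) = T * Nᵀ * U := by
        rw [← Matrix.smul_mul, hLKt, Matrix.mul_nonsing_inv_cancel_right _ _ hKt]
      have h4 : U.det • ((τ * T.det) • (Lᵀ * Kᵀ⁻¹ * U.adjugate)) = U.det • (T * Nᵀ) := by
        rw [smul_smul, ← Matrix.smul_mul, show U.det * (τ * T.det) = τ * (T.det * U.det) by ring,
          h3, Matrix.mul_assoc, Matrix.mul_adjugate]
        simp
      exact smul_right_injective M2 hUd0 h4
    simp only [Matrix.zero_mul, Matrix.mul_zero, zero_add, add_zero, Matrix.neg_mul, one_smul,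
      Matrix.mul_neg, neg_neg, Matrix.mul_smul, hLt, hLU, hUK, smul_zero, neg_zero, hQ]
  rw [Matrix.mul_assoc (_ * _) (fromBlocks ((1:ℝ) • JJ) 0 0 _), ← main,
    Matrix.mul_nonsing_inv_cancel_right _ _ hS5d]

lemma anti_inv (K : M2) (hKu : IsUnit K) :
    (fromBlocks 0 K (-Kᵀ) ((0:ℝ) • JJ))⁻¹ = fromBlocks 0 (-Kᵀ⁻¹) K⁻¹ 0 := by
  have hKt := (Matrix.isUnit_iff_isUnit_det _).1 ((Matrix.isUnit_transpose _).2 hKu)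
  have hKd := (Matrix.isUnit_iff_isUnit_det _).1 hKu
  apply Matrix.inv_eq_right_inv
  rw [fromBlocks_multiply]
  simp [Matrix.mul_nonsing_inv _ hKd, Matrix.mul_nonsing_inv _ hKt]

lemma diag_anti (U : M2) (β : ℝ) : fromBlocks ((1:ℝ) • JJ) 0 0 (β • JJ) *
      fromBlocks 0 (-(JJ * U)) (-(-(JJ * U))ᵀ) ((0:ℝ) • JJ) =
      fromBlocks 0 U (β • U.adjugate) 0 := by
  rw [fromBlocks_multiply]
  have : JJ * (JJ * U)ᵀ = U.adjugate := by
    rw [J_mul_tr, Matrix.adjugate_mul_distrib, Matrix.mul_assoc,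
      show JJ.adjugate = -JJ by
        rw [Matrix.adjugate_fin_two]; ext i j; fin_cases i <;> fin_cases j <;> simp [JJ]]
    simp [J_mul_J]
  have h2 : JJ * (JJ * U) = -U := by rw [← Matrix.mul_assoc, J_mul_J]; simp
  simp [-Matrix.transpose_mul, this, h2]

lemma adj_trace (X : M2) : X.adjugate.trace = X.trace := by
  rw [Matrix.adjugate_fin_two, Matrix.trace_fin_two, Matrix.trace_fin_two]; simp [add_comm]

lemma adj_adj (X : M2) : X.adjugate.adjugate = X := by
  rw [Matrix.adjugate_fin_two, Matrix.adjugate_fin_two]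
  ext i j; fin_cases i <;> fin_cases j <;> simp

lemma adj_det (X : M2) : X.adjugate.det = X.det := by
  rw [Matrix.det_adjugate]; simp

lemma good_diag (P T : M2) (h : 0 < P.det * T.det) : Good (fromBlocks P 0 0 T) := by
  have hP0 : P.det ≠ 0 := by rintro h'; simp [h'] at h
  have hT0 : T.det ≠ 0 := by rintro h'; simp [h'] at h
  have hPu : IsUnit P := by rw [Matrix.isUnit_iff_isUnit_det]; exact hP0.isUnit
  obtain ⟨τ, hτ⟩ : ∃ τ : ℝ, τ ^ 2 * T.det = P.det := by
    refine ⟨Real.sqrt (P.det / T.det), ?_⟩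
    have : 0 < P.det / T.det := by
      have : P.det / T.det = (P.det * T.det) / T.det ^ 2 := by field_simp
      rw [this]; positivity
    rw [Real.sq_sqrt this.le]; field_simp
  have hτ0 : τ ≠ 0 := by rintro rfl; apply hP0; simp [← hτ]
  obtain ⟨Y, hYd, hYt, hYdisc⟩ := trace_lemma (1 - τ • (T.adjugate * P⁻¹))
  set V := P⁻¹ * Y with hV
  have hPV : P * V = Y := by
    rw [hV, Matrix.mul_nonsing_inv_cancel_left _ _ hP0.isUnit]
  have hVd : P.det * V.det = 1 := by rw [← Matrix.det_mul, hPV, hYd]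
  have hVd0 : V.det ≠ 0 := by rintro h'; simp [h'] at hVd
  have hVa : IsUnit V.adjugate := by
    rw [Matrix.isUnit_iff_isUnit_det, adj_det]; exact hVd0.isUnit
  have hYu : IsUnit Y := by rw [Matrix.isUnit_iff_isUnit_det, hYd]; exact isUnit_one
  have hXt : (τ • (T * V.adjugate))ᵀ.trace = Y.trace := by
    rw [Matrix.mul_sub, Matrix.trace_sub, sub_eq_zero, Matrix.mul_one] at hYt
    rw [hYt, Matrix.trace_transpose, Matrix.mul_smul, Matrix.trace_smul, Matrix.trace_smul,
      ← adj_trace (T * V.adjugate), Matrix.adjugate_mul_distrib, adj_adj, hV, Matrix.mul_assoc,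
      Matrix.trace_mul_comm, Matrix.mul_assoc]
  have hXd : (τ • (T * V.adjugate))ᵀ.det = Y.det := by
    rw [Matrix.det_transpose, Matrix.det_smul, Matrix.det_mul, adj_det, hYd, Fintype.card_fin,
      ← mul_assoc, hτ, hVd]
  obtain ⟨K, hK, hKe⟩ := exists_sim (τ • (T * V.adjugate))ᵀ Y hXt hXd (by rwa [hXt, hXd])
  have hKd := (Matrix.isUnit_iff_isUnit_det _).1 hK
  have hKt := (Matrix.isUnit_iff_isUnit_det _).1 ((Matrix.isUnit_transpose _).2 hK)
  have hGu : IsUnit (Y * K) := hYu.mul hK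
  have hS1 := sk_anti _ hGu 0
  have hS2 := sk_anti K hK 0
  have hS3 := sk_diag 1 (-(1/τ)) one_ne_zero (by simp [hτ0])
  have hS4 := sk_anti (-(JJ * ((V.det)⁻¹ • V.adjugate))) (J_unit.mul (by
    rw [Matrix.isUnit_iff_isUnit_det, Matrix.det_smul, adj_det]; simp [hVd0])).neg 0
  have hS5 := sk_anti (-1 : M2) isUnit_one.neg 0
  refine ⟨_, _, _, _, _, hS1, hS2.inv, hS3, hS4, hS5, ?_⟩
  rw [anti_inv K hK, Matrix.mul_assoc (_ * _) (fromBlocks ((1:ℝ) • JJ) 0 0 _), diag_anti,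
    fromBlocks_multiply, fromBlocks_multiply, fromBlocks_multiply]
  have h1 : Y * K * K⁻¹ = Y := Matrix.mul_nonsing_inv_cancel_right _ _ hKd
  have h2 : (Y * K)ᵀ * Kᵀ⁻¹ = τ • (T * V.adjugate) := by
    rw [← hKe, Matrix.transpose_mul, Matrix.transpose_transpose,
      Matrix.mul_nonsing_inv_cancel_right _ _ hKt]
  have h3 : Y * V.adjugate = V.det • P := by
    rw [← hPV, Matrix.mul_assoc, Matrix.mul_adjugate]; simp
  have h4 : T * V.adjugate * V = V.det • T := by
    rw [Matrix.mul_assoc, Matrix.adjugate_mul]; simp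
  have h5 : (V.det⁻¹ • V.adjugate).adjugate = V.det⁻¹ • V := by
    rw [Matrix.adjugate_smul, adj_adj]; simp
  simp [-Matrix.transpose_mul, h1, h2, h3, h4, h5, smul_smul, hVd0]
  rw [show τ⁻¹ * V.det⁻¹ * (τ * V.det) = 1 by field_simp, one_smul]

lemma good_one (P T : M2) (h : 0 < P.det * T.det) : Good (fromBlocks P 0 1 T) := by
  have hP0 : P.det ≠ 0 := by rintro h'; simp [h'] at h
  have hT0 : T.det ≠ 0 := by rintro h'; simp [h'] at h
  have hPu : IsUnit P := by rw [Matrix.isUnit_iff_isUnit_det]; exact hP0.isUnit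
  have hTu : IsUnit T := by rw [Matrix.isUnit_iff_isUnit_det]; exact hT0.isUnit
  obtain ⟨τ, hτ⟩ : ∃ τ : ℝ, τ ^ 2 * (P.det * T.det) = 1 := by
    refine ⟨(Real.sqrt (P.det * T.det))⁻¹, ?_⟩
    rw [inv_pow, Real.sq_sqrt h.le, inv_mul_cancel₀ h.ne']
  obtain ⟨N, hNd, hNt, hdisc⟩ := trace_lemma (1 - τ • (P * T)ᵀ)
  refine good_core P T 1 N 0 τ hPu hTu hNd hτ N (by simp) (by simp [hNd]) hdisc ?_
  rw [Matrix.mul_sub, Matrix.trace_sub, sub_eq_zero, Matrix.mul_one] at hNt ⊢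
  rw [adj_trace, hNt, Matrix.mul_smul, Matrix.trace_smul, Matrix.mul_smul, Matrix.trace_smul]
  congr 1
  rw [Matrix.trace_mul_comm N.adjugate, Matrix.mul_assoc _ N, Matrix.mul_adjugate, hNd, one_smul,
    Matrix.mul_one, ← Matrix.trace_transpose]
  simp only [Matrix.transpose_mul, Matrix.transpose_transpose, Matrix.mul_assoc]
  rw [Matrix.trace_mul_comm P]
  simp only [Matrix.mul_assoc]

lemma core_E (p1 p2 p3 p4 t1 t2 t3 t4 τ n1 n2 n3 n4 b : ℝ)
    (hτ : τ ^ 2 * ((p1 * p4 - p2 * p3) * (t1 * t4 - t2 * t3)) = 1)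
    (hn : n1 * n4 - n2 * n3 = 1)
    (hnum : n4 - τ * (t1 * (n1 * p1 + n3 * p3) + t2 * (n2 * p1 + n4 * p3)) +
      b * (τ * (t1 * t4 - t2 * t3) * (p3 - p2) - (t2 - t3)) = 0)
    (hb : b ≠ 0) (hdet : b * (t1 * t4 - t2 * t3) - t2 * n4 - t1 * n3 ≠ 0)
    (hdisc : (n4 + b * t3 + b * t2) ^ 2 + 4 * b * t1 * (n3 - b * t4) ≠ 0) :
    Good (fromBlocks !![p1, p2; p3, p4] 0 !![0, 0; 0, 1] !![t1, t2; t3, t4]) := by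
  have hPu : IsUnit !![p1, p2; p3, p4] := by
    rw [Matrix.isUnit_iff_isUnit_det, Matrix.det_fin_two_of, isUnit_iff_ne_zero]
    intro h; simp [h] at hτ
  have hTu : IsUnit !![t1, t2; t3, t4] := by
    rw [Matrix.isUnit_iff_isUnit_det, Matrix.det_fin_two_of, isUnit_iff_ne_zero]
    intro h; simp [h] at hτ
  refine good_core _ _ _ !![n1, n2; n3, n4] b τ hPu hTu (by rw [Matrix.det_fin_two_of]; exact hn)
    (by rw [Matrix.det_fin_two_of, Matrix.det_fin_two_of]; exact hτ)
    !![-b * t2, b * t1; n3 - b * t4, n4 + b * t3] ?_ ?_ ?_ ?_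
  · ext i j; fin_cases i <;> fin_cases j <;> simp [JJ, Matrix.mul_apply] <;> ring
  · rw [Matrix.det_fin_two_of]
    have := mul_ne_zero hb hdet
    contrapose! this
    linear_combination this
  · rw [Matrix.det_fin_two_of, Matrix.trace_fin_two_of]
    contrapose! hdisc
    linear_combination hdisc
  · rw [Matrix.adjugate_fin_two_of, Matrix.trace_fin_two]
    simp only [Matrix.mul_apply, Fin.sum_univ_two, Matrix.sub_apply, Matrix.smul_apply,
      Matrix.transpose_apply, Matrix.one_apply]
    simp
    linear_combination hnum + hn * (-τ * (t1 * (n1 * p1 + n3 * p3) + t2 * (n2 * p1 + n4 * p3)) +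
      b * τ * (t1 * t4 - t2 * t3) * (p3 - p2))

lemma good_E (p1 p2 p3 p4 t1 t2 t3 t4 : ℝ)
    (h : 0 < (p1 * p4 - p2 * p3) * (t1 * t4 - t2 * t3)) :
    Good (fromBlocks !![p1, p2; p3, p4] 0 !![0, 0; 0, 1] !![t1, t2; t3, t4]) := by
  obtain ⟨τ, hτ⟩ : ∃ τ : ℝ, τ ^ 2 * ((p1 * p4 - p2 * p3) * (t1 * t4 - t2 * t3)) = 1 := by
    refine ⟨(Real.sqrt ((p1 * p4 - p2 * p3) * (t1 * t4 - t2 * t3)))⁻¹, ?_⟩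
    rw [inv_pow, Real.sq_sqrt h.le, inv_mul_cancel₀ h.ne']
  have hτ0 : τ ≠ 0 := by rintro rfl; simp at hτ
  have hT0 : t1 * t4 - t2 * t3 ≠ 0 := by intro h; simp [h] at hτ
  have hP0 : p1 * p4 - p2 * p3 ≠ 0 := by intro h; simp [h] at hτ
  by_cases ht : t1 = 0
  · subst ht
    have ht2 : t2 ≠ 0 := by rintro rfl; simp at hT0
    have ht3 : t3 ≠ 0 := by rintro rfl; simp at hT0
    by_cases hp : p1 = 0
    · subst hp
      have hp2 : p2 ≠ 0 := by rintro rfl; simp at hP0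
      have hp3 : p3 ≠ 0 := by rintro rfl; simp at hP0
      -- choose the sign of τ
      obtain ⟨σ, hσ, hσ1⟩ : ∃ σ : ℝ, σ ^ 2 * ((0 * p4 - p2 * p3) * (0 * t4 - t2 * t3)) = 1 ∧
          σ * t2 * p3 ≠ 1 := by
        by_cases hh : τ * t2 * p3 = 1
        · refine ⟨-τ, by rw [neg_sq]; exact hτ, ?_⟩
          intro h'; linarith
        · exact ⟨τ, hτ, hh⟩
      have hprod : (σ * t2 * p3) * (σ * t3 * p2) = 1 := by linear_combination hσ
      have hσ2 : σ * t3 * p2 ≠ 1 := by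
        intro h'; rw [h'] at hprod; apply hσ1; linarith
      set θ := σ * t2 * p3 with hθ
      set φ := σ * t3 * p2 with hφ
      have hθ1 : 1 - θ ≠ 0 := sub_ne_zero.2 (Ne.symm hσ1)
      have hφ1 : 1 - φ ≠ 0 := sub_ne_zero.2 (Ne.symm hσ2)
      refine core_E 0 p2 p3 p4 0 t2 t3 t4 σ 0 1 (-1)
        (-(σ * (0 * t4 - t2 * t3) * (p3 - p2) - (t2 - t3))) (1 - θ) hσ (by ring) ?_ hθ1 ?_ ?_
      · rw [hθ]; ring
      · have := mul_ne_zero (mul_ne_zero ht2 ht2) hφ1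
        contrapose! this
        rw [hφ]; rw [hθ] at this
        linear_combination -this
      · have h2 : 2 - θ - φ ≠ 0 := by
          intro h'
          have : (1 - θ) ^ 2 = 0 := by linear_combination -hprod - θ * h'
          exact hθ1 (by simpa using this)
        have := pow_ne_zero 2 (mul_ne_zero ht2 h2)
        contrapose! this
        rw [← this, hθ, hφ]; ring
    · -- t1 = 0, p1 ≠ 0
      obtain ⟨b, hb, hb1, hb2⟩ : ∃ b : ℝ, b ≠ 0 ∧ 1 + b * t3 ≠ 0 ∧ 1 + b * t3 + b * t2 ≠ 0 := by
        by_cases hc : 1 + 1 / t3 * t3 + 1 / t3 * t2 = 0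
        · refine ⟨2 / t3, by positivity, ?_, ?_⟩
          · field_simp; norm_num
          · field_simp at hc
            intro h'; field_simp at h'; apply ht3; linarith
        · refine ⟨1 / t3, by positivity, ?_, hc⟩
          field_simp; norm_num
      obtain ⟨x, hx⟩ : ∃ x, 1 * (1 - τ * t2 * p3) - τ * t2 * p1 * x +
          b * (τ * (0 * t4 - t2 * t3) * (p3 - p2) - (t2 - t3)) = 0 := by
        refine ⟨(1 * (1 - τ * t2 * p3) +
          b * (τ * (0 * t4 - t2 * t3) * (p3 - p2) - (t2 - t3))) / (τ * t2 * p1), ?_⟩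
        rw [mul_div_cancel₀ _ (by positivity)]; ring
      refine core_E p1 p2 p3 p4 0 t2 t3 t4 τ 1 x 0 1 b hτ (by ring) ?_ hb ?_ ?_
      · linear_combination hx
      · have := mul_ne_zero ht2 hb1
        contrapose! this; linear_combination -this
      · have := pow_ne_zero 2 hb2
        contrapose! this; linear_combination this
  · by_cases hp : p1 = 0
    · subst hp
      have hp3 : p3 ≠ 0 := by rintro rfl; simp at hP0
      -- b = 1, n4 = r large
      set c := τ * (t1 * t4 - t2 * t3) * (p3 - p2) - (t2 - t3) with hc
      set hh := 1 / (τ * p3) with hhh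
      have hτp : τ * p3 * hh = 1 := by rw [hhh]; field_simp
      have hh0 : hh ≠ 0 := by rintro h'; rw [h'] at hτp; simp at hτp
      -- t1 * y = r (hh - t2) + hh c
      obtain ⟨r, hr0, hr1, hr2⟩ : ∃ r : ℝ, r ≠ 0 ∧
          (t1 * t4 - t2 * t3 - hh * c) - r * hh ≠ 0 ∧
          r ^ 2 + (2 * (t2 + t3) + 4 * (hh - t2)) * r +
            ((t2 + t3) ^ 2 + 4 * hh * c - 4 * t1 * t4) ≠ 0 := by
        set A := 2 * (t2 + t3) + 4 * (hh - t2)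
        set B := (t2 + t3) ^ 2 + 4 * hh * c - 4 * t1 * t4
        set D := (t1 * t4 - t2 * t3 - hh * c)
        refine ⟨1 + |A| + |B| + |D / hh|, by positivity, ?_, ?_⟩
        · intro h'
          have : D / hh = 1 + |A| + |B| + |D / hh| := by field_simp; linarith
          have := le_abs_self (D / hh)
          have := abs_nonneg A
          have := abs_nonneg B
          linarith
        · set r := 1 + |A| + |B| + |D / hh|
          have h1 := abs_nonneg A
          have h2 := abs_nonneg B
          have h3 := abs_nonneg (D / hh)
          have h4 := neg_abs_le A
          have h5 := neg_abs_le B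
          have hr : r ≥ 1 + |A| + |B| := by simp only [r]; linarith
          have : 0 < r ^ 2 + A * r + B := by nlinarith
          exact this.ne'
      set y := (r * (hh - t2) + hh * c) / t1 with hy
      have hty : t1 * y = r * (hh - t2) + hh * c := by rw [hy]; field_simp
      refine core_E 0 p2 p3 p4 t1 t2 t3 t4 τ (1 / r) 0 y r 1 hτ (by field_simp; ring) ?_ one_ne_zero
        ?_ ?_
      · rw [← hc]
        linear_combination (-τ * p3) * hty - (r + c) * hτp
      · contrapose! hr1
        linear_combination hr1 + hty
      · contrapose! hr2
        linear_combination hr2 - 4 * hty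
    · -- p1, t1 ≠ 0
      set D := t1 * t4 - t2 * t3 with hD
      set δ := (t2 + t3) ^ 2 - 4 * t1 * t4 with hδ
      obtain ⟨s, hs0, hs1, hs2⟩ : ∃ s : ℝ, s ≠ 0 ∧ s * D + 1 ≠ 0 ∧ s * δ - 4 ≠ 0 := by
        by_cases hc : 1 / D * δ - 4 = 0
        · refine ⟨2 / D, by positivity, by field_simp; norm_num, ?_⟩
          intro h'; ring_nf at h' hc; linarith
        · exact ⟨1 / D, by positivity, by field_simp; norm_num, hc⟩
      obtain ⟨n, hn⟩ : ∃ n, -τ * (t1 * (n * p1 + (-1) * p3) + t2 * (1 * p1)) +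
          s * t1 * (τ * D * (p3 - p2) - (t2 - t3)) = 0 := by
        refine ⟨(τ * t1 * p3 - τ * t2 * p1 + s * t1 * (τ * D * (p3 - p2) - (t2 - t3))) /
          (τ * t1 * p1), ?_⟩
        field_simp; ring
      refine core_E p1 p2 p3 p4 t1 t2 t3 t4 τ n 1 (-1) 0 (s * t1) hτ (by ring) ?_ (by positivity)
        ?_ ?_
      · rw [← hD]; linear_combination hn
      · have := mul_ne_zero ht hs1
        contrapose! this; rw [← hD] at this; linear_combination this
      · have := mul_ne_zero (mul_ne_zero hs0 (pow_ne_zero 2 ht)) hs2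
        contrapose! this; rw [hδ]; linear_combination this

lemma good_blocks_congr (P R T g h : M2) (hg : IsUnit g) (hh : IsUnit h)
    (H : Good (fromBlocks (g * P * gᵀ) 0 (h * R * gᵀ) (h * T * hᵀ))) :
    Good (fromBlocks P 0 R T) := by
  have hu : IsUnit (fromBlocks g 0 0 h) := by
    rw [Matrix.isUnit_fromBlocks_zero₁₂]; exact ⟨hg, hh⟩
  apply Good.congr hu
  rw [fromBlocks_transpose, fromBlocks_multiply, fromBlocks_multiply]
  simpa using H

lemma rank_one_form (R : M2) (h0 : R ≠ 0) (hd : R.det = 0) :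
    ∃ g h : M2, IsUnit g ∧ IsUnit h ∧ h * R * gᵀ = !![0, 0; 0, 1] := by
  simp only [Matrix.isUnit_iff_isUnit_det, isUnit_iff_ne_zero]
  obtain ⟨a, b, c, d, rfl⟩ : ∃ a b c d : ℝ, R = !![a, b; c, d] :=
    ⟨_, _, _, _, Matrix.eta_fin_two R⟩
  rw [Matrix.det_fin_two_of] at hd
  by_cases h4 : d = 0
  · by_cases h3 : c = 0
    · by_cases h2 : b = 0
      · have h1 : a ≠ 0 := by
          rintro rfl; apply h0; rw [h2, h3, h4]; ext i j; fin_cases i <;> fin_cases j <;> rfl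
        subst h2 h3 h4
        refine ⟨!![0, 1; 1, 0], !![0, 1; 1 / a, 0], by simp, by simp [h1], ?_⟩
        ext i j; fin_cases i <;> fin_cases j <;> simp [Matrix.mul_apply, h1]
      · subst h3 h4
        refine ⟨!![1, -a / b; 0, 1], !![0, 1; 1 / b, 0], by simp, by simp [h2], ?_⟩
        ext i j; fin_cases i <;> fin_cases j <;> simp [Matrix.mul_apply, h2] <;> field_simp <;> ring
    · subst h4
      have : b = 0 := by
        have : b * c = 0 := by linarith
        exact (mul_eq_zero.1 this).resolve_right h3
      subst this
      refine ⟨!![0, 1; 1, 0], !![1, -a / c; 0, 1 / c], by simp, by simp [h3], ?_⟩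
      ext i j; fin_cases i <;> fin_cases j <;> simp [Matrix.mul_apply, h3]
  · refine ⟨!![1, -c / d; 0, 1], !![1, -b / d; 0, 1 / d], by simp, by simp [h4], ?_⟩
    have ha : a = b * c / d := by field_simp; linarith
    subst ha
    ext i j; fin_cases i <;> fin_cases j <;> simp [Matrix.mul_apply] <;> field_simp <;> ring

lemma good_tri (P R T : M2) (h : 0 < P.det * T.det) : Good (fromBlocks P 0 R T) := by
  by_cases hR : R = 0
  · rw [hR]; exact good_diag P T h
  have key : ∀ g h' : M2, IsUnit g → IsUnit h' →
      0 < (g * P * gᵀ).det * (h' * T * h'ᵀ).det := by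
    intro g h' hg hh
    have h1 := ((Matrix.isUnit_iff_isUnit_det _).1 hg).ne_zero
    have h2 := ((Matrix.isUnit_iff_isUnit_det _).1 hh).ne_zero
    simp only [Matrix.det_mul, Matrix.det_transpose]
    have : 0 < (P.det * T.det) * (g.det ^ 2 * h'.det ^ 2) := by positivity
    linarith
  by_cases hd : R.det = 0
  · obtain ⟨g, h', hg, hh, e⟩ := rank_one_form R hR hd
    apply good_blocks_congr P R T g h' hg hh
    have := key g h' hg hh
    rw [e]
    rw [Matrix.eta_fin_two (g * P * gᵀ), Matrix.eta_fin_two (h' * T * h'ᵀ)] at this ⊢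
    rw [Matrix.det_fin_two_of, Matrix.det_fin_two_of] at this
    exact good_E _ _ _ _ _ _ _ _ this
  · have hu : IsUnit R⁻¹ := by
      rw [Matrix.isUnit_nonsing_inv_iff, Matrix.isUnit_iff_isUnit_det]; exact Ne.isUnit hd
    apply good_blocks_congr P R T 1 R⁻¹ isUnit_one hu
    have := key 1 R⁻¹ isUnit_one hu
    rw [Matrix.nonsing_inv_mul _ (Ne.isUnit hd)]
    rw [Matrix.transpose_one, Matrix.mul_one]
    rw [Matrix.transpose_one] at this
    simpa using good_one _ _ this

lemma good_block (A B D E : M2) (hA : A.det ≠ 0) (h : 0 < (fromBlocks A B D E).det) :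
    Good (fromBlocks A B D E) := by
  have hAu : IsUnit A.det := Ne.isUnit hA
  set Z := -(A⁻¹ * B)ᵀ with hZ
  have hu : IsUnit (fromBlocks (1 : M2) (0 : M2) Z (1 : M2)) := by
    rw [Matrix.isUnit_fromBlocks_zero₁₂]; exact ⟨isUnit_one, isUnit_one⟩
  apply Good.congr hu
  have hdet : 0 < (fromBlocks (1 : M2) (0 : M2) Z (1 : M2) * fromBlocks A B D E * (fromBlocks (1 : M2) (0 : M2) Z (1 : M2))ᵀ).det := by
    rw [Matrix.det_mul, Matrix.det_mul, Matrix.det_transpose, Matrix.det_fromBlocks_zero₁₂]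
    simpa using h
  rw [fromBlocks_transpose, fromBlocks_multiply, fromBlocks_multiply] at hdet ⊢
  have h0 : A * Zᵀ + B = 0 := by
    rw [hZ, Matrix.transpose_neg, Matrix.transpose_transpose, Matrix.mul_neg,
      Matrix.mul_nonsing_inv_cancel_left _ _ hAu]; simp
  simp only [Matrix.one_mul, Matrix.zero_mul, Matrix.mul_zero, add_zero, Matrix.mul_one,
    Matrix.transpose_one, Matrix.transpose_zero, h0] at hdet ⊢
  apply good_tri
  rwa [Matrix.det_fromBlocks_zero₁₂] at hdet

abbrev V4 := Fin 4 → ℝ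

lemma exists_g (u v : V4) (h : LinearIndependent ℝ ![u, v]) :
    ∃ g : Matrix (Fin 4) (Fin 4) ℝ, IsUnit g ∧ g 0 = u ∧ g 1 = v := by
  obtain ⟨w, hw⟩ := exists_linearIndependent_snoc_of_lt_finrank h (by simp)
  obtain ⟨z, hz⟩ := exists_linearIndependent_snoc_of_lt_finrank hw (by simp)
  refine ⟨Matrix.of (Fin.snoc (Fin.snoc ![u, v] w) z : Fin 4 → V4), ?_, ?_, ?_⟩
  · rw [← Matrix.linearIndependent_rows_iff_isUnit]; exact hz
  · rfl
  · rfl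

lemma exists_g1 (u : V4) (h : u ≠ 0) :
    ∃ g : Matrix (Fin 4) (Fin 4) ℝ, IsUnit g ∧ g 0 = u := by
  have h1 : LinearIndependent ℝ ![u] := by
    rw [linearIndependent_unique_iff]; simpa using h
  obtain ⟨w, hw⟩ := exists_linearIndependent_snoc_of_lt_finrank h1 (by simp)
  have he : ![u, w] = (Fin.snoc ![u] w : Fin 2 → V4) := by
    ext i j; fin_cases i <;> rfl
  obtain ⟨g, hg, h0, -⟩ := exists_g u w (by rw [he]; exact hw)
  exact ⟨g, hg, h0⟩

lemma congr_apply (C g : Matrix (Fin 4) (Fin 4) ℝ) (i j : Fin 4) :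
    (g * C * gᵀ) i j = g i ⬝ᵥ C *ᵥ g j := by
  rw [Matrix.mul_assoc, Matrix.mul_apply]
  simp only [dotProduct, Matrix.mulVec, Matrix.mul_apply, Matrix.transpose_apply]

/-- A form with all 2-dimensional Gram determinants zero and nonzero 00 entry is singular. -/
lemma det_zero_of_gram (C : Matrix (Fin 4) (Fin 4) ℝ) (h00 : C 0 0 ≠ 0)
    (H : ∀ u v : V4, (u ⬝ᵥ C *ᵥ u) * (v ⬝ᵥ C *ᵥ v) - (u ⬝ᵥ C *ᵥ v) * (v ⬝ᵥ C *ᵥ u) = 0) :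
    C.det = 0 := by
  set d : Fin 4 → Fin 4 → ℝ := fun i j => C 0 0 * C i j - C i 0 * C 0 j with hd
  have hD : ∀ i, d i i = 0 := by
    intro i
    have := H (Pi.single 0 1) (Pi.single i 1)
    simp at this
    simp only [hd]; linarith
  have hs : ∀ i j, d i j + d j i = 0 := by
    intro i j
    have h1 := H (Pi.single 0 1) (Pi.single i 1 + Pi.single j 1)
    simp [Matrix.mulVec_add] at h1
    have h2 := hD i
    have h3 := hD j
    simp only [hd] at h2 h3 ⊢
    linarith
  have e : C 0 0 ^ 2 * C.det = d 1 1 * d 2 2 * d 3 3 + d 1 2 * d 2 3 * d 3 1 + d 1 3 * d 2 1 * d 3 2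
      - d 1 3 * d 2 2 * d 3 1 - d 1 2 * d 2 1 * d 3 3 - d 1 1 * d 2 3 * d 3 2 := by
    simp [hd, Matrix.det_succ_row_zero, Fin.sum_univ_succ, Fin.succAbove]
    ring
  have : C 0 0 ^ 2 * C.det = 0 := by
    rw [e, hD 1, hD 2, hD 3, show d 2 1 = - d 1 2 by linarith [hs 1 2],
      show d 3 1 = - d 1 3 by linarith [hs 1 3], show d 3 2 = - d 2 3 by linarith [hs 2 3]]
    ring
  exact (mul_eq_zero.1 this).resolve_left (pow_ne_zero 2 h00)

lemma exists_gram (C : Matrix (Fin 4) (Fin 4) ℝ) (hC : C.det ≠ 0) :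
    ∃ u v : V4, (u ⬝ᵥ C *ᵥ u) * (v ⬝ᵥ C *ᵥ v) - (u ⬝ᵥ C *ᵥ v) * (v ⬝ᵥ C *ᵥ u) ≠ 0 := by
  by_contra! H
  by_cases hx : ∃ x : V4, x ⬝ᵥ C *ᵥ x ≠ 0
  · obtain ⟨x, hx⟩ := hx
    obtain ⟨g, hg, h0⟩ := exists_g1 x (by rintro rfl; simp at hx)
    have hgd := ((Matrix.isUnit_iff_isUnit_det _).1 hg).ne_zero
    have : (g * C * gᵀ).det = 0 := by
      apply det_zero_of_gram
      · rw [congr_apply, h0]; exact hx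
      · intro u v
        have := H (u ᵥ* g) (v ᵥ* g)
        have e : ∀ a b : V4, a ⬝ᵥ (g * C * gᵀ) *ᵥ b = (a ᵥ* g) ⬝ᵥ C *ᵥ (b ᵥ* g) := by
          intro a b
          rw [← Matrix.mulVec_transpose g b, Matrix.mulVec_mulVec, ← Matrix.dotProduct_mulVec,
            Matrix.mulVec_mulVec, Matrix.mul_assoc]
        simpa only [e] using this
    simp [Matrix.det_mul, hgd, hC] at this
  · push Not at hx
    apply hC
    have : C = 0 := by
      ext i j
      have h1 := H (Pi.single i 1) (Pi.single j 1)
      have h2 := hx (Pi.single i 1 + Pi.single j 1)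
      have h3 := hx (Pi.single i 1)
      have h4 := hx (Pi.single j 1)
      simp [Matrix.mulVec_add] at h1 h2 h3 h4
      rw [h3, h4] at h1 h2
      have : C j i = - C i j := by linarith
      rw [this] at h1
      simpa using h1
    rw [this]; simp

lemma good_all (C : Matrix (Fin 4) (Fin 4) ℝ) (hdet : 0 < C.det) : Good C := by
  obtain ⟨u, v, huv⟩ := exists_gram C hdet.ne'
  have hli : LinearIndependent ℝ ![u, v] := by
    rw [LinearIndependent.pair_iff]
    intro s t hst
    have e1 : s * (u ⬝ᵥ C *ᵥ u) + t * (u ⬝ᵥ C *ᵥ v) = 0 := by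
      have := congrArg (fun z => u ⬝ᵥ C *ᵥ z) hst
      simpa [Matrix.mulVec_add, Matrix.mulVec_smul] using this
    have e2 : s * (v ⬝ᵥ C *ᵥ u) + t * (v ⬝ᵥ C *ᵥ v) = 0 := by
      have := congrArg (fun z => v ⬝ᵥ C *ᵥ z) hst
      simpa [Matrix.mulVec_add, Matrix.mulVec_smul] using this
    constructor
    · apply (mul_eq_zero.1 (?_ : s * _ = 0)).resolve_right huv
      linear_combination (v ⬝ᵥ C *ᵥ v) * e1 - (u ⬝ᵥ C *ᵥ v) * e2
    · apply (mul_eq_zero.1 (?_ : t * _ = 0)).resolve_right huv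
      linear_combination (u ⬝ᵥ C *ᵥ u) * e2 - (v ⬝ᵥ C *ᵥ u) * e1
  obtain ⟨g, hg, h0, h1⟩ := exists_g u v hli
  have hgd := ((Matrix.isUnit_iff_isUnit_det _).1 hg).ne_zero
  apply Good.congr hg
  set C' := g * C * gᵀ with hC'
  have hd' : 0 < C'.det := by
    rw [hC', Matrix.det_mul, Matrix.det_mul, Matrix.det_transpose]
    have : 0 < C.det * g.det ^ 2 := by positivity
    linarith
  let e : Fin 2 ⊕ Fin 2 ≃ Fin 4 := finSumFinEquiv
  have hG : Good (C'.submatrix e e) := by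
    have hd2 : 0 < (C'.submatrix e e).det := by rwa [Matrix.det_submatrix_equiv_self]
    rw [← Matrix.fromBlocks_toBlocks (C'.submatrix e e)] at hd2 ⊢
    apply good_block _ _ _ _ _ hd2
    rw [Matrix.det_fin_two]
    have : C' 0 0 * C' 1 1 - C' 0 1 * C' 1 0 ≠ 0 := by
      rw [hC']
      simp only [congr_apply, h0, h1]
      exact huv
    exact this
  have := hG.reindex e.symm
  simpa using this

theorem correlation_eq_product_of_nullPolarities (C : Matrix (Fin 4) (Fin 4) ℝ)
    (hC : IsUnit C) (hdet : 0 < C.det) :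
    ∃ k : ℕ, Odd k ∧ 1 ≤ k ∧ k ≤ 5 ∧
      ∃ S : Fin k → Matrix (Fin 4) (Fin 4) ℝ,
        (∀ i, IsUnit (S i) ∧ (S i)ᵀ = -(S i)) ∧
        ∃ lam : ℝ, lam ≠ 0 ∧ C = lam • (List.ofFn S).prod := by
  obtain ⟨S₁, S₂, S₃, S₄, S₅, h1, h2, h3, h4, h5, e⟩ := good_all C hdet
  refine ⟨5, by decide, by norm_num, le_rfl, ![S₁, S₂, S₃, S₄, S₅], ?_, 1, one_ne_zero, ?_⟩
  · intro i
    fin_cases i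
    · exact h1
    · exact h2
    · exact h3
    · exact h4
    · exact h5
  · rw [e]
    simp [List.ofFn_succ, Matrix.mul_assoc]
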